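/- arXiv:math/0203085 — 4 statements merged into one kernel-verified Lean document; each statement's English description precedes it below -/
import Mathlib

section
/- Let X be a finite-dimensional real normed space and let A be a ball in X. Let X_A denote the vector space X equipped with the norm given by the Minkowski (gauge) functional of A. Then A is a sufficient enlargement for X if and only if the L∞-factorable norm of the identity map from X to X_A is at most 1; that is, if and only if inf{‖u₁‖·‖u₂‖ : u₁ : X → ℓ∞ and u₂ : ℓ∞ → X_A are bounded linear maps with u₂ ∘ u₁ = id_X} ≤ 1, where ℓ∞ is the Banach space of bounded real sequences with the supremum norm. -/
open Set Metric MeasureTheory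
open scoped Pointwise ENNReal

/-- A *ball* in a normed space: a bounded closed convex set, symmetric with
respect to `0`, with nonempty interior. -/
def IsBall {X : Type*} [NormedAddCommGroup X] [NormedSpace ℝ X] (A : Set X) : Prop :=
  Bornology.IsBounded A ∧ IsClosed A ∧ Convex ℝ A ∧ (∀ x ∈ A, -x ∈ A) ∧ (interior A).Nonempty

/-- `A` is a sufficient enlargement for `X`: for every isometric embedding of `X`
into a Banach space `Y` there is a continuous linear projection `P : Y → X`
(i.e. `P ∘ i = id`) with `P (B(Y)) ⊆ A`. -/
def IsSufficientEnlargement {X : Type*} [NormedAddCommGroup X] [NormedSpace ℝ X]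
    (A : Set X) : Prop :=
  ∀ (Y : Type) [NormedAddCommGroup Y] [NormedSpace ℝ Y] [CompleteSpace Y],
    ∀ i : X →ₗᵢ[ℝ] Y, ∃ P : Y →L[ℝ] X, (∀ x, P (i x) = x) ∧ P '' closedBall 0 1 ⊆ A

/-!
`ℓ∞` is an injective space: by the Hahn–Banach theorem applied to each coordinate, a map from a
subspace into `ℓ∞` extends with the same norm. Hence a factorization `id = u₂ ∘ u₁` through `ℓ∞`
yields, for every isometric embedding `i : X → Y`, a projection `u₂ ∘ T` of `Y` onto `X`, where `T`
extends `u₁` along `i`; its norm as a map into `X_A` is at most `‖u₁‖ ‖u₂‖`. The infimum of these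
norms is attained because a bounded set of operators into a finite-dimensional space is relatively
compact for pointwise convergence. Conversely, `X` is separable and thus embeds isometrically into
`ℓ∞`, so a sufficient enlargement provides a projection of `ℓ∞` onto `X`.
-/

section BoundedSequences

open TopologicalSpace

theorem exists_lp_infty_apply_eq {𝕜 Y ι : Type*} [NontriviallyNormedField 𝕜]
    [SeminormedAddCommGroup Y] [NormedSpace 𝕜 Y] {E : ι → Type*} [∀ n, NormedAddCommGroup (E n)]
    [∀ n, NormedSpace 𝕜 (E n)] (φ : ∀ n, Y →L[𝕜] E n) {C : ℝ} (hC : 0 ≤ C)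
    (hφ : ∀ n, ‖φ n‖ ≤ C) :
    ∃ T : Y →L[𝕜] lp E ∞, (∀ y n, T y n = φ n y) ∧ ‖T‖ ≤ C := by
  have norm_apply_le (y : Y) (n : ι) : ‖φ n y‖ ≤ C * ‖y‖ := (φ n).le_of_opNorm_le (hφ n) y
  have memℓp (y : Y) : Memℓp (fun n ↦ φ n y) ∞ :=
    memℓp_infty ⟨C * ‖y‖, forall_mem_range.2 (norm_apply_le y)⟩
  let T : Y →ₗ[𝕜] lp E ∞ :=
    { toFun := fun y ↦ ⟨fun n ↦ φ n y, memℓp y⟩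
      map_add' := fun x y ↦ lp.ext (funext fun n ↦ map_add (φ n) x y)
      map_smul' := fun c y ↦ lp.ext (funext fun n ↦ map_smul (φ n) c y) }
  exact ⟨T.mkContinuous C fun y ↦ lp.norm_le_of_forall_le (by positivity) (norm_apply_le y),
    fun _ _ ↦ rfl, T.mkContinuous_norm_le hC _⟩

variable {𝕜 X Y ι : Type*} [RCLike 𝕜] [NormedAddCommGroup X] [NormedSpace 𝕜 X]

variable (𝕜 X) in
theorem nonempty_linearIsometry_lp_infty [SeparableSpace X] :
    Nonempty (X →ₗᵢ[𝕜] lp (fun _ : ℕ ↦ 𝕜) ∞) := by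
  choose φ norm_φ_le φ_apply using fun n ↦ exists_dual_vector'' 𝕜 (denseSeq X n)
  obtain ⟨T, T_apply, norm_T_le⟩ := exists_lp_infty_apply_eq φ zero_le_one norm_φ_le
  have norm_le_norm_apply (x : X) : ‖x‖ ≤ ‖T x‖ := by
    refine (denseRange_denseSeq X).induction_on x
      (isClosed_le continuous_norm T.continuous.norm) fun n ↦ ?_
    calc ‖denseSeq X n‖ = ‖T (denseSeq X n) n‖ := by simp [T_apply, φ_apply]
      _ ≤ ‖T (denseSeq X n)‖ := lp.norm_apply_le_norm ENNReal.top_ne_zero _ n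
  exact ⟨⟨T.toLinearMap, fun x ↦
    le_antisymm ((T.le_of_opNorm_le norm_T_le x).trans_eq (one_mul _)) (norm_le_norm_apply x)⟩⟩

variable [SeminormedAddCommGroup Y] [NormedSpace 𝕜 Y]

theorem exists_dual_extension_of_linearIsometry (i : X →ₗᵢ[𝕜] Y) (f : StrongDual 𝕜 X) :
    ∃ g : StrongDual 𝕜 Y, (∀ x, g (i x) = f x) ∧ ‖g‖ ≤ ‖f‖ := by
  let e := i.equivRange
  let f' : StrongDual 𝕜 i.range := f.comp (e.symm : i.range →L[𝕜] X)
  obtain ⟨g, g_eq, norm_g⟩ := exists_extension_norm_eq _ f'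
  refine ⟨g, fun x ↦ ?_, ?_⟩
  · simpa [f', e] using g_eq (e x)
  · rw [norm_g]
    exact f'.opNorm_le_bound (norm_nonneg f) fun y ↦ by
      simpa [f'] using f.le_opNorm (e.symm y)

theorem exists_lp_infty_extension_of_linearIsometry (i : X →ₗᵢ[𝕜] Y)
    (u : X →L[𝕜] lp (fun _ : ι ↦ 𝕜) ∞) :
    ∃ T : Y →L[𝕜] lp (fun _ : ι ↦ 𝕜) ∞, (∀ x, T (i x) = u x) ∧ ‖T‖ ≤ ‖u‖ := by
  let coord (n : ι) : StrongDual 𝕜 X := (lp.evalCLM 𝕜 (fun _ : ι ↦ 𝕜) ∞ n).comp u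
  have norm_coord_le (n : ι) : ‖coord n‖ ≤ ‖u‖ :=
    (coord n).opNorm_le_bound (norm_nonneg u) fun x ↦
      (lp.norm_apply_le_norm ENNReal.top_ne_zero (u x) n).trans (u.le_opNorm x)
  choose g g_apply norm_g_le using fun n ↦ exists_dual_extension_of_linearIsometry i (coord n)
  obtain ⟨T, T_apply, norm_T_le⟩ := exists_lp_infty_apply_eq g (norm_nonneg u)
    fun n ↦ (norm_g_le n).trans (norm_coord_le n)
  exact ⟨T, fun x ↦ lp.ext (funext fun n ↦ (T_apply _ n).trans (g_apply n x)), norm_T_le⟩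

end BoundedSequences

theorem hasLeftInverse_of_linearIsometry {𝕜 X Y : Type*} [RCLike 𝕜] [NormedAddCommGroup X]
    [NormedSpace 𝕜 X] [FiniteDimensional 𝕜 X] [SeminormedAddCommGroup Y] [NormedSpace 𝕜 Y]
    (i : X →ₗᵢ[𝕜] Y) : i.toContinuousLinearMap.HasLeftInverse := by
  let e := i.equivRange
  obtain ⟨g, g_eq⟩ := ContinuousLinearMap.exist_extension_of_finiteDimensional_range
    (e.symm : i.range →L[𝕜] X)
  exact ⟨g, fun x ↦ by simpa [e] using (DFunLike.congr_fun g_eq (e x)).symm⟩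

open Filter Topology in
theorem exists_tendsto_apply_of_isBounded_range {𝕜 E F ι : Type*} [NontriviallyNormedField 𝕜]
    [SeminormedAddCommGroup E] [NormedSpace 𝕜 E] [NormedAddCommGroup F] [NormedSpace 𝕜 F]
    [ProperSpace F] (U : Ultrafilter ι) {f : ι → E →L[𝕜] F}
    (hf : Bornology.IsBounded (range f)) :
    ∃ g : E →L[𝕜] F, ∀ x, Tendsto (fun n ↦ f n x) U (𝓝 (g x)) := by
  have f_mem (n : ι) : ⇑(f n) ∈ closure ((fun g : E →L[𝕜] F ↦ ⇑g) '' range f) :=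
    subset_closure ⟨f n, mem_range_self n, rfl⟩
  obtain ⟨g, g_mem, tendsto_g⟩ :=
    (ContinuousLinearMap.isCompact_closure_image_coe_of_bounded hf).ultrafilter_le_nhds
      (U.map fun n ↦ ⇑(f n)) (tendsto_principal.2 (Eventually.of_forall f_mem))
  exact ⟨.ofMemClosureImageCoeBounded g hf g_mem, tendsto_pi_nhds.1 tendsto_g⟩

section Gauge

open Filter Topology

variable {E F X : Type*} [NormedAddCommGroup E] [NormedSpace ℝ E]
  [NormedAddCommGroup F] [NormedSpace ℝ F] [NormedAddCommGroup X] [NormedSpace ℝ X] {A : Set X}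

theorem IsBall.mem_nhds_zero (hA : IsBall A) : A ∈ 𝓝 0 := by
  obtain ⟨-, -, hconv, hsymm, x, hx⟩ := hA
  have midpoint_mem : midpoint ℝ x (-x) ∈ interior A :=
    hconv.openSegment_interior_self_subset_interior hx (hsymm x (interior_subset hx))
      (midpoint_mem_openSegment x (-x))
  rwa [midpoint_self_neg, mem_interior_iff_mem_nhds] at midpoint_mem

theorem image_closedBall_subset_iff_gauge_le_norm (hA : IsClosed A) (hconv : Convex ℝ A)
    (h0 : A ∈ 𝓝 0) (u : E →ₗ[ℝ] X) :
    u '' closedBall 0 1 ⊆ A ↔ ∀ z, gauge A (u z) ≤ ‖z‖ := by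
  refine ⟨fun h z ↦ gauge_le_of_mem (norm_nonneg z) (smul_set_mono h ?_), fun h ↦ ?_⟩
  · rw [← image_smul_set, smul_unitClosedBall_of_nonneg (norm_nonneg z)]
    exact mem_image_of_mem u (by simp)
  · rintro _ ⟨z, hz, rfl⟩
    rw [← hA.closure_eq, ← gauge_le_one_iff_mem_closure hconv h0]
    exact (h z).trans (mem_closedBall_zero_iff.1 hz)

/-- The norm of `u` as an operator into `X_A`, the space `X` normed by the gauge of `A`. -/
noncomputable def gaugeOpNorm (A : Set X) (u : E →L[ℝ] X) : ℝ :=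
  sInf {M : ℝ | 0 ≤ M ∧ ∀ z, gauge A (u z) ≤ M * ‖z‖}

theorem gaugeOpNorm_nonneg (A : Set X) (u : E →L[ℝ] X) : 0 ≤ gaugeOpNorm A u :=
  Real.sInf_nonneg fun _ hM ↦ hM.1

theorem gaugeOpNorm_le_of_forall {u : E →L[ℝ] X} {M : ℝ} (hM : 0 ≤ M)
    (h : ∀ z, gauge A (u z) ≤ M * ‖z‖) : gaugeOpNorm A u ≤ M :=
  csInf_le ⟨0, fun _ hM ↦ hM.1⟩ ⟨hM, h⟩

theorem gauge_apply_le_gaugeOpNorm_mul_norm (h0 : A ∈ 𝓝 0) (u : E →L[ℝ] X) (z : E) :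
    gauge A (u z) ≤ gaugeOpNorm A u * ‖z‖ := by
  have nonempty : {M : ℝ | 0 ≤ M ∧ ∀ z, gauge A (u z) ≤ M * ‖z‖}.Nonempty := by
    obtain ⟨r, hr, ball_subset⟩ := Metric.mem_nhds_iff.1 h0
    refine ⟨r⁻¹ * ‖u‖, by positivity, fun z ↦ ?_⟩
    rw [mul_assoc, le_inv_mul_iff₀ hr]
    exact (mul_gauge_le_norm ball_subset).trans (u.le_opNorm z)
  have isClosed : IsClosed {M : ℝ | 0 ≤ M ∧ ∀ z, gauge A (u z) ≤ M * ‖z‖} := by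
    simp only [ofPred_and, ofPred_forall]
    exact isClosed_Ici.inter <| isClosed_iInter fun z ↦
      isClosed_le continuous_const (continuous_id.mul continuous_const)
  exact (isClosed.csInf_mem nonempty ⟨0, fun _ hM ↦ hM.1⟩).2 z

theorem gaugeOpNorm_comp_le (h0 : A ∈ 𝓝 0) (u : F →L[ℝ] X) (T : E →L[ℝ] F) :
    gaugeOpNorm A (u.comp T) ≤ ‖T‖ * gaugeOpNorm A u := by
  have hu := gaugeOpNorm_nonneg A u
  refine gaugeOpNorm_le_of_forall (by positivity) fun z ↦ ?_
  calc gauge A (u (T z)) ≤ gaugeOpNorm A u * ‖T z‖ := gauge_apply_le_gaugeOpNorm_mul_norm h0 u _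
    _ ≤ gaugeOpNorm A u * (‖T‖ * ‖z‖) := by gcongr; exact T.le_opNorm z
    _ = ‖T‖ * gaugeOpNorm A u * ‖z‖ := by ring

theorem norm_le_mul_gaugeOpNorm {R : ℝ} (hR : 0 < R) (hAR : A ⊆ closedBall 0 R) (h0 : A ∈ 𝓝 0)
    (u : E →L[ℝ] X) : ‖u‖ ≤ R * gaugeOpNorm A u := by
  have hu := gaugeOpNorm_nonneg A u
  refine u.opNorm_le_bound (by positivity) fun z ↦ ?_
  calc ‖u z‖ ≤ R * gauge A (u z) :=
        (div_le_iff₀' hR).1 (le_gauge_of_subset_closedBall (absorbent_nhds_zero h0) hR.le hAR)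
    _ ≤ R * (gaugeOpNorm A u * ‖z‖) := by
        gcongr; exact gauge_apply_le_gaugeOpNorm_mul_norm h0 u z
    _ = R * gaugeOpNorm A u * ‖z‖ := by ring

theorem image_closedBall_subset_iff_gaugeOpNorm_le_one (hA : IsClosed A) (hconv : Convex ℝ A)
    (h0 : A ∈ 𝓝 0) (u : E →L[ℝ] X) : u '' closedBall 0 1 ⊆ A ↔ gaugeOpNorm A u ≤ 1 := by
  refine (image_closedBall_subset_iff_gauge_le_norm hA hconv h0 u.toLinearMap).trans
    ⟨fun h ↦ gaugeOpNorm_le_of_forall zero_le_one fun z ↦ (h z).trans_eq (one_mul _).symm,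
      fun h z ↦ ?_⟩
  exact (gauge_apply_le_gaugeOpNorm_mul_norm h0 u z).trans
    (mul_le_of_le_one_left (norm_nonneg z) h)

theorem exists_interpolation_gaugeOpNorm_le [ProperSpace X] (hbdd : Bornology.IsBounded A)
    (hconv : Convex ℝ A) (h0 : A ∈ 𝓝 0) {ι : Type*} (y : ι → E) (x : ι → X) {c : ℝ}
    (h : ∀ c' > c, ∃ u : E →L[ℝ] X, (∀ k, u (y k) = x k) ∧ gaugeOpNorm A u ≤ c') :
    ∃ u : E →L[ℝ] X, (∀ k, u (y k) = x k) ∧ gaugeOpNorm A u ≤ c := by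
  have c_nonneg : 0 ≤ c := le_of_forall_gt_imp_ge_of_dense fun c' hc' ↦
    let ⟨u, _, hu⟩ := h c' hc'
    (gaugeOpNorm_nonneg A u).trans hu
  obtain ⟨s, s_anti, s_gt, tendsto_s⟩ := exists_seq_strictAnti_tendsto c
  choose u u_apply gaugeOpNorm_u_le using fun n ↦ h (s n) (s_gt n)
  obtain ⟨R, hR, hAR⟩ := hbdd.subset_closedBall_lt 0 0
  have bounded : Bornology.IsBounded (range u) := by
    refine isBounded_iff_forall_norm_le.2 ⟨R * s 0, forall_mem_range.2 fun n ↦ ?_⟩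
    calc ‖u n‖ ≤ R * gaugeOpNorm A (u n) := norm_le_mul_gaugeOpNorm hR hAR h0 _
      _ ≤ R * s 0 := by
        gcongr; exact (gaugeOpNorm_u_le n).trans (s_anti.antitone n.zero_le)
  obtain ⟨v, tendsto_v⟩ := exists_tendsto_apply_of_isBounded_range (hyperfilter ℕ) bounded
  refine ⟨v, fun k ↦ ?_, gaugeOpNorm_le_of_forall c_nonneg fun z ↦ ?_⟩
  · exact tendsto_nhds_unique (tendsto_v (y k)) (by simp only [u_apply, tendsto_const_nhds])
  · refine le_of_tendsto_of_tendsto'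
      (((continuous_gauge hconv h0).tendsto _).comp (tendsto_v z))
      ((tendsto_s.mono_left Nat.hyperfilter_le_atTop).mul_const ‖z‖) fun n ↦ ?_
    exact (gauge_apply_le_gaugeOpNorm_mul_norm h0 (u n) z).trans
      (mul_le_mul_of_nonneg_right (gaugeOpNorm_u_le n) (norm_nonneg z))

/-- The `L∞`-factorable norm of the identity map from `X` to `X_A`. It has the junk value `0` when
the identity of `X` does not factor through `ℓ∞`. -/
noncomputable def linftyFactorableNorm (A : Set X) : ℝ :=
  sInf {c : ℝ | ∃ (u₁ : X →L[ℝ] lp (fun _ : ℕ ↦ ℝ) ∞) (u₂ : lp (fun _ : ℕ ↦ ℝ) ∞ →L[ℝ] X),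
    (∀ x, u₂ (u₁ x) = x) ∧ c = ‖u₁‖ * gaugeOpNorm A u₂}

theorem linftyFactorableNorm_le {u₁ : X →L[ℝ] lp (fun _ : ℕ ↦ ℝ) ∞}
    {u₂ : lp (fun _ : ℕ ↦ ℝ) ∞ →L[ℝ] X} (hu : ∀ x, u₂ (u₁ x) = x) :
    linftyFactorableNorm A ≤ ‖u₁‖ * gaugeOpNorm A u₂ := by
  refine csInf_le ⟨0, ?_⟩ ⟨u₁, u₂, hu, rfl⟩
  rintro _ ⟨v₁, v₂, -, rfl⟩
  exact mul_nonneg (norm_nonneg v₁) (gaugeOpNorm_nonneg A v₂)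

variable [FiniteDimensional ℝ X]

theorem exists_factorization_of_linftyFactorableNorm_lt {c : ℝ}
    (hc : linftyFactorableNorm A < c) :
    ∃ (u₁ : X →L[ℝ] lp (fun _ : ℕ ↦ ℝ) ∞) (u₂ : lp (fun _ : ℕ ↦ ℝ) ∞ →L[ℝ] X),
      (∀ x, u₂ (u₁ x) = x) ∧ ‖u₁‖ * gaugeOpNorm A u₂ < c := by
  have : ProperSpace X := FiniteDimensional.proper ℝ X
  obtain ⟨j⟩ := nonempty_linearIsometry_lp_infty ℝ X
  obtain ⟨P, hP⟩ := hasLeftInverse_of_linearIsometry j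
  unfold linftyFactorableNorm at hc
  obtain ⟨_, ⟨u₁, u₂, hu, rfl⟩, hlt⟩ :=
    exists_lt_of_csInf_lt (by exact ⟨_, j.toContinuousLinearMap, P, hP, rfl⟩) hc
  exact ⟨u₁, u₂, hu, hlt⟩

theorem exists_projection_gaugeOpNorm_le_of_linftyFactorableNorm_lt (h0 : A ∈ 𝓝 0) {c : ℝ}
    (hc : linftyFactorableNorm A < c) (i : X →ₗᵢ[ℝ] E) :
    ∃ P : E →L[ℝ] X, (∀ x, P (i x) = x) ∧ gaugeOpNorm A P ≤ c := by
  obtain ⟨u₁, u₂, hu, hlt⟩ := exists_factorization_of_linftyFactorableNorm_lt hc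
  obtain ⟨T, T_apply, norm_T_le⟩ := exists_lp_infty_extension_of_linearIsometry i u₁
  refine ⟨u₂.comp T, fun x ↦ by simp [T_apply, hu], ?_⟩
  calc gaugeOpNorm A (u₂.comp T) ≤ ‖T‖ * gaugeOpNorm A u₂ := gaugeOpNorm_comp_le h0 u₂ T
    _ ≤ ‖u₁‖ * gaugeOpNorm A u₂ := mul_le_mul_of_nonneg_right norm_T_le (gaugeOpNorm_nonneg A u₂)
    _ ≤ c := hlt.le

theorem statement0_general (hbdd : Bornology.IsBounded A) (hA : IsClosed A)
    (hconv : Convex ℝ A) (h0 : A ∈ 𝓝 0) :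
    IsSufficientEnlargement A ↔ linftyFactorableNorm A ≤ 1 := by
  have : ProperSpace X := FiniteDimensional.proper ℝ X
  constructor
  · intro h
    obtain ⟨j⟩ := nonempty_linearIsometry_lp_infty ℝ X
    obtain ⟨P, hP, image_subset⟩ := h _ j
    calc linftyFactorableNorm A ≤ ‖j.toContinuousLinearMap‖ * gaugeOpNorm A P :=
          linftyFactorableNorm_le hP
      _ ≤ 1 := mul_le_one₀ j.norm_toContinuousLinearMap_le (gaugeOpNorm_nonneg A P)
          ((image_closedBall_subset_iff_gaugeOpNorm_le_one hA hconv h0 P).1 image_subset)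
  · intro h Y _ _ _ i
    obtain ⟨P, hP, gaugeOpNorm_le⟩ :=
      exists_interpolation_gaugeOpNorm_le hbdd hconv h0 i id fun c hc ↦
        exists_projection_gaugeOpNorm_le_of_linftyFactorableNorm_lt h0 (h.trans_lt hc) i
    exact ⟨P, hP,
      (image_closedBall_subset_iff_gaugeOpNorm_le_one hA hconv h0 P).2 gaugeOpNorm_le⟩

end Gauge

/-- Proposition 1: `A` is a sufficient enlargement for `X` iff the `L∞`-factorable
norm of the identity `X → X_A` (where `X_A` carries the gauge norm of `A`) is `≤ 1`,
i.e. `inf ‖u₁‖·‖u₂‖ ≤ 1` over factorizations `id = u₂ ∘ u₁` through `ℓ∞`.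
The operator norm of `u₂ : ℓ∞ → X_A` is expressed as
`inf {M ≥ 0 | ∀ z, gauge A (u₂ z) ≤ M ‖z‖}`. -/
theorem statement0 {X : Type} [NormedAddCommGroup X] [NormedSpace ℝ X]
    [FiniteDimensional ℝ X] (A : Set X) (hA : IsBall A) :
    IsSufficientEnlargement A ↔
      sInf {c : ℝ | ∃ (u₁ : X →L[ℝ] lp (fun _ : ℕ => ℝ) ∞)
          (u₂ : lp (fun _ : ℕ => ℝ) ∞ →L[ℝ] X),
        (∀ x, u₂ (u₁ x) = x) ∧
        c = ‖u₁‖ * sInf {M : ℝ | 0 ≤ M ∧ ∀ z, gauge A (u₂ z) ≤ M * ‖z‖}} ≤ 1 :=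
  statement0_general hA.1 hA.2.1 hA.2.2.1 hA.mem_nhds_zero
end

section
/- Let G be a finite subgroup of the orthogonal group O(n) such that every linear operator on ℝⁿ commuting with all elements of G is a scalar multiple of the identity, and let y ∈ ℝⁿ with ‖y‖₂ = 1. Then the Minkowski sum of segments A = (n/|G|) · Σ_{g ∈ G} [−g(y), g(y)] is a sufficient enlargement for l₂ⁿ. -/
/-!
The orbit `(g y)` is a tight frame: its frame operator `x ↦ ∑ g, ⟪g y, x⟫ g y` commutes with the
group, hence is scalar, and taking traces identifies the scalar as `|G| ‖y‖² / n`. This expresses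
the identity of `ℝⁿ` as a combination of the rank-one maps `x ↦ ⟪g y, x⟫ g y`. Extending each
functional `⟪g y, ·⟫` to `Y` by Hahn–Banach turns the identity into a projection of `Y` onto `ℝⁿ`,
and as the extensions have norm `‖g y‖ = 1`, the image of the unit ball of `Y` lies in the sum of
segments.
-/

open Set Metric MeasureTheory
open scoped Pointwise ENNReal

open Module (finrank)
open InnerProductSpace (rankOne)

lemma exists_dual_extension_norm_eq {𝕜 X Y : Type*} [RCLike 𝕜]
    [NormedAddCommGroup X] [NormedSpace 𝕜 X] [NormedAddCommGroup Y] [NormedSpace 𝕜 Y]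
    (i : X →ₗᵢ[𝕜] Y) (φ : StrongDual 𝕜 X) :
    ∃ f : StrongDual 𝕜 Y, (∀ x, f (i x) = φ x) ∧ ‖f‖ = ‖φ‖ := by
  let e := i.equivRange
  obtain ⟨f, hf, hf_norm⟩ :=
    exists_extension_norm_eq i.range (φ.comp (e.symm : i.range →L[𝕜] X))
  refine ⟨f, fun x ↦ ?_, ?_⟩
  · simpa [e] using hf (e x)
  · rw [hf_norm, φ.opNorm_comp_linearIsometryEquiv e.symm]

lemma smul_mem_segment_neg_self {E : Type*} [AddCommGroup E] [Module ℝ E] {r : ℝ}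
    (hr : |r| ≤ 1) (v : E) : r • v ∈ segment ℝ (-v) v := by
  obtain ⟨hr₁, hr₂⟩ := abs_le.mp hr
  exact ⟨(1 - r) / 2, (1 + r) / 2, by linarith, by linarith, by ring, by module⟩

lemma isSufficientEnlargement_smul_sum_segment {X ι : Type*} [NormedAddCommGroup X]
    [NormedSpace ℝ X] [Fintype ι] (c : ℝ) (φ : ι → StrongDual ℝ X) (u : ι → X)
    (hφ : ∀ j, ‖φ j‖ ≤ 1) (h_id : ∀ x, c • ∑ j, φ j x • u j = x) :
    IsSufficientEnlargement (c • ∑ j, segment ℝ (-u j) (u j)) := by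
  intro Y _ _ _ i
  choose f hf hf_norm using fun j ↦ exists_dual_extension_norm_eq i (φ j)
  have abs_f_le {z : Y} (hz : z ∈ closedBall 0 1) (j : ι) : |f j z| ≤ 1 :=
    (f j).unit_le_opNorm z (mem_closedBall_zero_iff.mp hz) |>.trans ((hf_norm j).trans_le (hφ j))
  let P : Y →L[ℝ] X := c • ∑ j, (f j).smulRight (u j)
  have P_apply (z : Y) : P z = c • ∑ j, f j z • u j := by simp [P]
  refine ⟨P, fun x ↦ by simp only [P_apply, hf, h_id], ?_⟩
  rintro _ ⟨z, hz, rfl⟩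
  rw [P_apply]
  exact smul_mem_smul_set <| finsetSum_mem_finsetSum _ _ _ fun j _ ↦
    smul_mem_segment_neg_self (abs_f_le hz j) (u j)

section FrameOperator

variable {𝕜 E ι : Type*} [RCLike 𝕜] [NormedAddCommGroup E] [InnerProductSpace 𝕜 E] [Fintype ι]

variable (𝕜) in
/-- The frame operator `x ↦ ∑ j, ⟪u j, x⟫ u j` of a finite family of vectors; the family is a tight
frame when this operator is a positive multiple of the identity. -/
noncomputable def frameOperator (u : ι → E) : E →ₗ[𝕜] E :=
  ∑ j, (rankOne 𝕜 (u j) (u j)).toLinearMap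

lemma frameOperator_apply (u : ι → E) (x : E) :
    frameOperator 𝕜 u x = ∑ j, inner 𝕜 (u j) x • u j := by
  simp [frameOperator]

lemma isSymmetric_frameOperator (u : ι → E) : (frameOperator 𝕜 u).IsSymmetric :=
  LinearMap.isSymmetric_sum _ fun j _ ↦ InnerProductSpace.isSymmetric_rankOne_self (u j)

lemma trace_frameOperator [FiniteDimensional 𝕜 E] (u : ι → E) :
    (frameOperator 𝕜 u).trace 𝕜 E = ∑ j, (‖u j‖ : 𝕜) ^ 2 := by
  simp [frameOperator, InnerProductSpace.trace_rankOne]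

lemma finrank_mul_eq_sum_norm_sq_of_frameOperator_eq_smul_id [FiniteDimensional 𝕜 E]
    {u : ι → E} {c : 𝕜} (hc : frameOperator 𝕜 u = c • LinearMap.id) :
    finrank 𝕜 E * c = ∑ j, (‖u j‖ : 𝕜) ^ 2 := by
  rw [← trace_frameOperator, hc, map_smul, LinearMap.trace_id, smul_eq_mul, mul_comm]

lemma frameOperator_map_of_permutes {u : ι → E} (g : E →ₗᵢ[𝕜] E) (σ : Equiv.Perm ι)
    (hσ : ∀ j, g (u j) = u (σ j)) (x : E) :
    frameOperator 𝕜 u (g x) = g (frameOperator 𝕜 u x) := by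
  calc frameOperator 𝕜 u (g x)
      = ∑ j, inner 𝕜 (u (σ j)) (g x) • u (σ j) := by
        rw [frameOperator_apply, Equiv.sum_comp σ fun j ↦ inner 𝕜 (u j) (g x) • u j]
    _ = ∑ j, inner 𝕜 (u j) x • g (u j) := by simp only [← hσ, g.inner_map_map]
    _ = g (frameOperator 𝕜 u x) := by simp only [frameOperator_apply, map_sum, map_smul]

lemma finrank_div_card_smul_frameOperator_orbit [FiniteDimensional 𝕜 E] {G : Type*} [Group G]
    [Fintype G] (ρ : G →* E ≃ₗᵢ[𝕜] E)
    (hρ : ∀ T : E →ₗ[𝕜] E, T.IsSymmetric → (∀ g x, T (ρ g x) = ρ g (T x)) →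
      ∃ c : 𝕜, T = c • LinearMap.id) (y : E) :
    ((finrank 𝕜 E : 𝕜) / Fintype.card G) • frameOperator 𝕜 (fun g ↦ ρ g y) =
      (‖y‖ : 𝕜) ^ 2 • LinearMap.id := by
  have h_comm (g : G) (x : E) : frameOperator 𝕜 (fun h ↦ ρ h y) (ρ g x) =
      ρ g (frameOperator 𝕜 (fun h ↦ ρ h y) x) :=
    frameOperator_map_of_permutes (ρ g).toLinearIsometry (Equiv.mulLeft g) (by simp) x
  obtain ⟨c, hc⟩ := hρ _ (isSymmetric_frameOperator _) h_comm
  have h_trace : finrank 𝕜 E * c = Fintype.card G * (‖y‖ : 𝕜) ^ 2 := by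
    simpa using finrank_mul_eq_sum_norm_sq_of_frameOperator_eq_smul_id hc
  have h_card : (Fintype.card G : 𝕜) ≠ 0 := Nat.cast_ne_zero.mpr Fintype.card_ne_zero
  rw [hc, smul_smul, div_mul_eq_mul_div, h_trace, mul_div_cancel_left₀ _ h_card]

end FrameOperator

/-- `hρ` amounts to irreducibility over `ℝ`: orthogonal projections onto invariant subspaces are
symmetric and commute with `ρ`, and eigenspaces of a symmetric operator commuting with `ρ` are
invariant. -/
theorem statement7_general {E G : Type*} [NormedAddCommGroup E] [InnerProductSpace ℝ E]
    [FiniteDimensional ℝ E] [Group G] [Fintype G] (ρ : G →* E ≃ₗᵢ[ℝ] E)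
    (hρ : ∀ T : E →ₗ[ℝ] E, T.IsSymmetric → (∀ g x, T (ρ g x) = ρ g (T x)) →
      ∃ c : ℝ, T = c • LinearMap.id)
    (y : E) (hy : ‖y‖ = 1) :
    IsSufficientEnlargement (((finrank ℝ E : ℝ) / Fintype.card G) •
      ∑ g, segment ℝ (-ρ g y) (ρ g y)) := by
  refine isSufficientEnlargement_smul_sum_segment _ (fun g ↦ innerSL ℝ (ρ g y)) _
    (fun g ↦ by simp [hy]) fun x ↦ ?_
  have h_tight := LinearMap.congr_fun (finrank_div_card_smul_frameOperator_orbit ρ hρ y) x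
  simpa [frameOperator_apply, hy] using h_tight

/-- Theorem 4 (first part): if `G` is a finite subgroup of the orthogonal group of
`ℝⁿ` whose commutant consists of scalar multiples of the identity, and `‖y‖ = 1`,
then `A = (n/|G|) Σ_{g ∈ G} [-g(y), g(y)]` is a sufficient enlargement for `l₂ⁿ`. -/
theorem statement7 {n : ℕ}
    (G : Subgroup (EuclideanSpace ℝ (Fin n) ≃ₗᵢ[ℝ] EuclideanSpace ℝ (Fin n)))
    [Fintype G]
    (hG : ∀ T : EuclideanSpace ℝ (Fin n) →ₗ[ℝ] EuclideanSpace ℝ (Fin n),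
      (∀ g ∈ G, ∀ x, T (g x) = g (T x)) → ∃ c : ℝ, T = c • LinearMap.id)
    (y : EuclideanSpace ℝ (Fin n)) (hy : ‖y‖ = 1) :
    IsSufficientEnlargement (((n : ℝ) / (Fintype.card G : ℝ)) •
      ∑ g : G, segment ℝ
        (-((g : EuclideanSpace ℝ (Fin n) ≃ₗᵢ[ℝ] EuclideanSpace ℝ (Fin n)) y))
        ((g : EuclideanSpace ℝ (Fin n) ≃ₗᵢ[ℝ] EuclideanSpace ℝ (Fin n)) y)) := by
  simpa only [finrank_euclideanSpace_fin] using!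
    statement7_general G.subtype (fun T _ hT ↦ hG T fun g hg ↦ hT ⟨g, hg⟩) y hy
end

section
/- Identify ℝ^{n+m} with ℝⁿ ⊕ ℝ^m (Euclidean direct sum). If A₁ is a sufficient enlargement for l₂ⁿ and A₂ is a sufficient enlargement for l₂^m, then the Minkowski sum A₁ + A₂ (with A₁ ⊆ ℝⁿ × {0} and A₂ ⊆ {0} × ℝ^m) is a sufficient enlargement for l₂^{n+m}. -/
open Set Metric MeasureTheory
open scoped Pointwise ENNReal

/-!
Let `π : W → X` be a norm-nonincreasing linear map with an isometric linear right inverse, and let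
`i : W → Y` be an isometric embedding. Dividing `Y` by the closure of `i (ker π)` turns `π` into an
isometric embedding of `X` in a Banach space, so a sufficient enlargement `A` of `X` provides an
operator from the quotient to `X`; composed with the quotient map, it extends `π` to an operator on
`Y` that maps the unit ball into `A`. Applied to the two coordinate projections of an `ℓᵖ` direct
sum, this gives the two coordinates of the required projection.
-/

section Retraction

variable {R W X : Type*} [Ring R] [SeminormedAddCommGroup W] [Module R W]
  [SeminormedAddCommGroup X] [Module R X]

theorem norm_mkQ_topologicalClosure [ContinuousConstSMul R W] (S : Submodule R W) (w : W) :
    ‖S.topologicalClosure.mkQ w‖ = infDist w S :=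
  calc ‖S.topologicalClosure.mkQ w‖ = infDist w S.topologicalClosure := QuotientAddGroup.norm_mk w
    _ = infDist w S := by rw [Submodule.topologicalClosure_coe, infDist_closure]

theorem infDist_ker_eq_norm_of_leftInverse {π : W →ₗ[R] X} {σ : X →ₗᵢ[R] W}
    (hπ : ∀ w, ‖π w‖ ≤ ‖w‖) (hπσ : Function.LeftInverse π σ) (w : W) :
    infDist w (LinearMap.ker π) = ‖π w‖ := by
  apply le_antisymm
  · have hmem : w - σ (π w) ∈ LinearMap.ker π := by
      rw [LinearMap.mem_ker, map_sub, hπσ, sub_self]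
    calc infDist w (LinearMap.ker π) ≤ dist w (w - σ (π w)) := infDist_le_dist_of_mem hmem
      _ = ‖π w‖ := by rw [dist_self_sub_right, σ.norm_map]
  · refine (le_infDist ⟨0, zero_mem _⟩).2 fun z hz ↦ ?_
    calc ‖π w‖ = ‖π (w - z)‖ := by rw [map_sub, LinearMap.mem_ker.1 hz, sub_zero]
      _ ≤ ‖w - z‖ := hπ _
      _ = dist w z := (dist_eq_norm w z).symm

theorem norm_mkQ_topologicalClosure_map_ker {Y : Type*} [SeminormedAddCommGroup Y] [Module R Y]
    [ContinuousConstSMul R Y] {π : W →ₗ[R] X} {σ : X →ₗᵢ[R] W} (hπ : ∀ w, ‖π w‖ ≤ ‖w‖)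
    (hπσ : Function.LeftInverse π σ) (i : W →ₗᵢ[R] Y) (w : W) :
    ‖((LinearMap.ker π).map i.toLinearMap).topologicalClosure.mkQ (i w)‖ = ‖π w‖ :=
  calc ‖((LinearMap.ker π).map i.toLinearMap).topologicalClosure.mkQ (i w)‖
      = infDist (i w) (i '' LinearMap.ker π) := norm_mkQ_topologicalClosure _ _
    _ = infDist w (LinearMap.ker π) := infDist_image i.isometry
    _ = ‖π w‖ := infDist_ker_eq_norm_of_leftInverse hπ hπσ w

end Retraction

theorem IsSufficientEnlargement.exists_extension_of_leftInverse {W X : Type*}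
    [SeminormedAddCommGroup W] [NormedSpace ℝ W] [NormedAddCommGroup X] [NormedSpace ℝ X]
    {A : Set X} (hA : IsSufficientEnlargement A) {π : W →ₗ[ℝ] X} {σ : X →ₗᵢ[ℝ] W}
    (hπ : ∀ w, ‖π w‖ ≤ ‖w‖) (hπσ : Function.LeftInverse π σ) {Y : Type} [NormedAddCommGroup Y]
    [NormedSpace ℝ Y] [CompleteSpace Y] (i : W →ₗᵢ[ℝ] Y) :
    ∃ P : Y →L[ℝ] X, (∀ w, P (i w) = π w) ∧ MapsTo P (closedBall 0 1) A := by
  let S := ((LinearMap.ker π).map i.toLinearMap).topologicalClosure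
  have : IsClosed (S : Set Y) := Submodule.isClosed_topologicalClosure _
  have hnorm (w : W) : ‖S.mkQ (i w)‖ = ‖π w‖ := norm_mkQ_topologicalClosure_map_ker hπ hπσ i w
  let j : X →ₗᵢ[ℝ] Y ⧸ S :=
    { toLinearMap := S.mkQ ∘ₗ i.toLinearMap ∘ₗ σ.toLinearMap
      norm_map' := fun x ↦ (hnorm (σ x)).trans (by rw [hπσ x]) }
  obtain ⟨Q, hQj, hQA⟩ := hA (Y ⧸ S) j
  refine ⟨Q.comp S.mkQL, fun w ↦ ?_, fun y hy ↦ hQA ⟨S.mkQL y, ?_, rfl⟩⟩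
  · have hj : S.mkQ (i w) = j (π w) := by
      rw [← sub_eq_zero, ← norm_eq_zero]
      calc ‖S.mkQ (i w) - j (π w)‖ = ‖S.mkQ (i (w - σ (π w)))‖ := by
            rw [map_sub i, map_sub S.mkQ]; rfl
        _ = ‖π (w - σ (π w))‖ := hnorm _
        _ = 0 := by rw [map_sub, hπσ, sub_self, norm_zero]
    calc Q (S.mkQ (i w)) = Q (j (π w)) := by rw [hj]
      _ = π w := hQj _
  · rw [mem_closedBall_zero_iff] at hy ⊢
    exact (Submodule.Quotient.norm_mk_le S y).trans hy

section DirectSum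

variable (R : Type*) [Semiring R] (p : ℝ≥0∞) [Fact (1 ≤ p)] (X₁ X₂ : Type*)
  [SeminormedAddCommGroup X₁] [Module R X₁] [SeminormedAddCommGroup X₂] [Module R X₂]

/-- The isometric embedding of the first summand in an `ℓᵖ` direct sum. -/
noncomputable def lpSumInl : X₁ →ₗᵢ[R] WithLp p (X₁ × X₂) where
  toLinearMap := (WithLp.linearEquiv p R (X₁ × X₂)).symm.toLinearMap ∘ₗ LinearMap.inl R X₁ X₂
  norm_map' := WithLp.norm_toLp_fst p X₁ X₂

/-- The isometric embedding of the second summand in an `ℓᵖ` direct sum. -/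
noncomputable def lpSumInr : X₂ →ₗᵢ[R] WithLp p (X₁ × X₂) where
  toLinearMap := (WithLp.linearEquiv p R (X₁ × X₂)).symm.toLinearMap ∘ₗ LinearMap.inr R X₁ X₂
  norm_map' := WithLp.norm_toLp_snd p X₁ X₂

variable {X₁ X₂}

theorem lpSumInl_add_lpSumInr (x₁ : X₁) (x₂ : X₂) :
    lpSumInl R p X₁ X₂ x₁ + lpSumInr R p X₁ X₂ x₂ = WithLp.toLp p (x₁, x₂) := by
  change WithLp.toLp p (x₁, 0) + WithLp.toLp p (0, x₂) = _
  rw [← WithLp.toLp_add, Prod.mk_add_mk, add_zero, zero_add]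

end DirectSum

theorem statement11_general {p : ℝ≥0∞} [Fact (1 ≤ p)] {X₁ X₂ : Type*} [NormedAddCommGroup X₁]
    [NormedSpace ℝ X₁] [NormedAddCommGroup X₂] [NormedSpace ℝ X₂] {A₁ : Set X₁} {A₂ : Set X₂}
    (hA₁ : IsSufficientEnlargement A₁) (hA₂ : IsSufficientEnlargement A₂) :
    IsSufficientEnlargement (lpSumInl ℝ p X₁ X₂ '' A₁ + lpSumInr ℝ p X₁ X₂ '' A₂) := by
  intro Y _ _ _ i
  obtain ⟨P₁, hP₁, hB₁⟩ := hA₁.exists_extension_of_leftInverse (π := WithLp.fstₗ p ℝ X₁ X₂)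
    (σ := lpSumInl ℝ p X₁ X₂) (WithLp.norm_fst_le X₁) (fun _ ↦ rfl) i
  obtain ⟨P₂, hP₂, hB₂⟩ := hA₂.exists_extension_of_leftInverse (π := WithLp.sndₗ p ℝ X₁ X₂)
    (σ := lpSumInr ℝ p X₁ X₂) (WithLp.norm_snd_le X₁) (fun _ ↦ rfl) i
  refine ⟨(WithLp.prodContinuousLinearEquiv p ℝ X₁ X₂).symm.toContinuousLinearMap.comp
    (P₁.prod P₂), fun x ↦ ?_, ?_⟩
  · change WithLp.toLp p (P₁ (i x), P₂ (i x)) = x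
    rw [hP₁, hP₂]
    rfl
  · rintro _ ⟨y, hy, rfl⟩
    exact ⟨_, mem_image_of_mem _ (hB₁ hy), _, mem_image_of_mem _ (hB₂ hy),
      lpSumInl_add_lpSumInr ℝ p (P₁ y) (P₂ y)⟩

/-- If `A₁` and `A₂` are sufficient enlargements for `l₂ⁿ` and `l₂^m`, then the
Minkowski sum `A₁ + A₂` (with `A₁ ⊆ ℝⁿ × {0}`, `A₂ ⊆ {0} × ℝ^m`) is a sufficient
enlargement for `l₂^{n+m} = l₂ⁿ ⊕₂ l₂^m`. -/
theorem statement11 {n m : ℕ}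
    (A₁ : Set (EuclideanSpace ℝ (Fin n))) (A₂ : Set (EuclideanSpace ℝ (Fin m)))
    (hA₁ball : IsBall A₁) (hA₁ : IsSufficientEnlargement A₁)
    (hA₂ball : IsBall A₂) (hA₂ : IsSufficientEnlargement A₂) :
    IsSufficientEnlargement
      (((fun u : EuclideanSpace ℝ (Fin n) =>
          (WithLp.equiv 2 (EuclideanSpace ℝ (Fin n) × EuclideanSpace ℝ (Fin m))).symm (u, 0)) '' A₁)
        + ((fun v : EuclideanSpace ℝ (Fin m) =>
          (WithLp.equiv 2 (EuclideanSpace ℝ (Fin n) × EuclideanSpace ℝ (Fin m))).symm (0, v)) '' A₂)) :=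
  statement11_general hA₁ hA₂
end

section
/- Let X be ℝⁿ equipped with an arbitrary norm and let E be an ellipsoid of maximal volume contained in the closed unit ball B(X); that is, E = S(B₂ⁿ) for some invertible linear map S : ℝⁿ → ℝⁿ, where B₂ⁿ is the closed Euclidean unit ball, E ⊆ B(X), and the Lebesgue volume of E is greater than or equal to the Lebesgue volume of every ellipsoid contained in B(X). Then √n · E is a sufficient enlargement for X. -/
open Set Metric MeasureTheory
open scoped Pointwise ENNReal

/-!
The idea is John's theorem. Pull the norm of `X` back to Euclidean space along the map `S` whose
image of the unit ball is `E`, and call a unit vector `f` a contact vector if `⟪f, v⟫ ≤ ‖S v‖` for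
all `v`. If `n⁻¹ • id` were not in the convex hull of the operators `f ⊗ f`, a separating
functional, written as `A ↦ tr (L A)` and shifted by a multiple of the trace, would give an operator
`L` with positive trace and `⟪f, L f⟫ < 0` at all contact vectors. For small `t > 0` the map
`1 + t L` then keeps the ellipsoid inside the unit ball and increases its volume, contradicting
maximality.

Hence `id = ∑ cₖ fₖ ⊗ fₖ` with `cₖ ≥ 0` and `∑ cₖ = n`. The functionals `⟪fₖ, S⁻¹ ·⟫` on `X` have
norm at most one, so by Hahn–Banach they extend to functionals `Gₖ` of norm at most one on `Y`. The
projection is `P y = S (∑ cₖ Gₖ(y) fₖ)`, and the factor `√n` comes from the Bessel-type inequality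
`‖∑ cₖ aₖ fₖ‖² ≤ ∑ cₖ aₖ² ≤ n` for `|aₖ| ≤ 1`.
-/

open Filter Topology Module InnerProductSpace

lemma isCompact_convexHull_of_isCompact {E : Type*} [AddCommGroup E] [Module ℝ E]
    [TopologicalSpace E] [ContinuousAdd E] [ContinuousSMul ℝ E] [FiniteDimensional ℝ E]
    {s : Set E} (hs : IsCompact s) : IsCompact (convexHull ℝ s) := by
  -- A convex combination needs at most `finrank ℝ E + 1` points of `s`.
  have caratheodory : convexHull ℝ s = ⋃ k ∈ Finset.range (finrank ℝ E + 2),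
      (fun p : (Fin k → ℝ) × (Fin k → E) ↦ ∑ j, p.1 j • p.2 j) ''
        (stdSimplex ℝ (Fin k) ×ˢ univ.pi fun _ ↦ s) := by
    ext x
    simp only [mem_iUnion, mem_image, mem_prod, Finset.mem_range]
    constructor
    · intro hx
      obtain ⟨ι, _, z, w, hz, hind, hw, hw1, rfl⟩ := eq_pos_convex_span_of_mem_convexHull hx
      let σ := (Fintype.equivFin ι).symm
      refine ⟨Fintype.card ι, ?_, ⟨w ∘ σ, z ∘ σ⟩,
        ⟨⟨fun j ↦ (hw _).le, hw1 ▸ σ.sum_comp w⟩, fun j _ ↦ hz ⟨_, rfl⟩⟩,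
        σ.sum_comp fun j ↦ w j • z j⟩
      have := hind.card_le_finrank_succ
      have := Submodule.finrank_le (vectorSpan ℝ (range z))
      lia
    · rintro ⟨k, -, ⟨w, z⟩, ⟨hw, hz⟩, rfl⟩
      exact (convex_convexHull ℝ s).sum_mem (fun j _ ↦ hw.1 j) hw.2
        fun j _ ↦ subset_convexHull ℝ s (hz j trivial)
  rw [caratheodory]
  refine Finset.isCompact_biUnion _ fun k _ ↦ ?_
  exact ((isCompact_stdSimplex ℝ (Fin k)).prod (isCompact_univ_pi fun _ ↦ hs)).image (by fun_prop)

lemma eventually_one_lt_det_one_add_smul {E : Type*} [AddCommGroup E] [Module ℝ E]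
    [FiniteDimensional ℝ E] {L : E →ₗ[ℝ] E} (hL : 0 < LinearMap.trace ℝ E L) :
    ∀ᶠ t : ℝ in 𝓝[>] 0, 1 < LinearMap.det (1 + t • L) := by
  let b := finBasis ℝ E
  let M := LinearMap.toMatrix b b L
  let p := (Matrix.det (1 + (Polynomial.X : Polynomial ℝ) • M.map Polynomial.C)).divX.divX
  have det_eq (t : ℝ) : LinearMap.det (1 + t • L) = 1 + t * (M.trace + p.eval t * t) := by
    rw [← LinearMap.det_toMatrix b, map_add, map_smul, LinearMap.toMatrix_one,
      Matrix.det_one_add_smul]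
    ring
  have slope_pos : ∀ᶠ t : ℝ in 𝓝 0, 0 < M.trace + p.eval t * t := by
    have hcont : Continuous fun t ↦ M.trace + p.eval t * t := by fun_prop
    refine hcont.continuousAt.eventually (lt_mem_nhds ?_)
    simpa [M, ← LinearMap.trace_eq_matrix_trace] using hL
  filter_upwards [slope_pos.filter_mono nhdsWithin_le_nhds, self_mem_nhdsWithin] with t ht ht0
  rw [det_eq]
  exact lt_add_of_pos_right 1 (mul_pos ht0 ht)

lemma abs_det_le_one_of_addHaar_image_comp_le {E : Type*} [NormedAddCommGroup E]
    [NormedSpace ℝ E] [FiniteDimensional ℝ E] [MeasurableSpace E] [BorelSpace E]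
    {μ : Measure E} [μ.IsAddHaarMeasure] (A : E ≃ₗ[ℝ] E) (T : E →ₗ[ℝ] E) {s : Set E}
    (hs : μ s ≠ 0) (hs' : μ s ≠ ⊤) (h : μ ((A.toLinearMap ∘ₗ T) '' s) ≤ μ (A '' s)) :
    |LinearMap.det T| ≤ 1 := by
  have hA : μ (A '' s) = ENNReal.ofReal |LinearMap.det (A : E →ₗ[ℝ] E)| * μ s :=
    Measure.addHaar_image_linearMap μ A.toLinearMap s
  have hA0 : μ (A '' s) ≠ 0 := by
    have := A.isUnit_det'.ne_zero
    simpa [hA, hs] using this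
  have hA' : μ (A '' s) ≠ ⊤ := hA ▸ ENNReal.mul_ne_top ENNReal.ofReal_ne_top hs'
  have hAT : μ ((A.toLinearMap ∘ₗ T) '' s) =
      ENNReal.ofReal |LinearMap.det T| * μ (A '' s) := by
    rw [Measure.addHaar_image_linearMap, LinearMap.det_comp, abs_mul,
      ENNReal.ofReal_mul (abs_nonneg _), hA]
    ring
  by_contra! hdet
  rw [hAT] at h
  have := ENNReal.mul_lt_mul_left hA0 hA' (ENNReal.one_lt_ofReal.2 hdet)
  exact (this.trans_le h).ne (one_mul _)

lemma exists_strongDual_extension_norm_eq {𝕜 X Y : Type*} [RCLike 𝕜] [NormedAddCommGroup X]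
    [NormedSpace 𝕜 X] [NormedAddCommGroup Y] [NormedSpace 𝕜 Y] (i : X →ₗᵢ[𝕜] Y)
    (g : StrongDual 𝕜 X) : ∃ G : StrongDual 𝕜 Y, (∀ x, G (i x) = g x) ∧ ‖G‖ = ‖g‖ := by
  obtain ⟨G, hG, hnorm⟩ := exists_extension_norm_eq (LinearMap.range i.toLinearMap)
    (g ∘L i.equivRange.symm.toContinuousLinearEquiv.toContinuousLinearMap)
  refine ⟨G, fun x ↦ ?_, hnorm.trans (g.opNorm_comp_linearIsometryEquiv i.equivRange.symm)⟩
  simpa using hG (i.equivRange x)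

lemma eventually_norm_add_smul_le_one {V : Type*} [NormedAddCommGroup V] [InnerProductSpace ℝ V]
    {K : Set V} (hK : IsCompact K) (hK1 : ∀ f ∈ K, ‖f‖ ≤ 1) (L : V →L[ℝ] V)
    (hL : ∀ f ∈ K, ‖f‖ = 1 → ⟪f, L f⟫_ℝ < 0) :
    ∀ᶠ t : ℝ in 𝓝[>] 0, ∀ f ∈ K, ‖f + t • L f‖ ≤ 1 := by
  have expand (t : ℝ) (f : V) :
      ‖f + t • L f‖ ^ 2 = ‖f‖ ^ 2 + t * (2 * ⟪f, L f⟫_ℝ + t * ‖L f‖ ^ 2) := by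
    rw [norm_add_sq_real, inner_smul_right, norm_smul, mul_pow, Real.norm_eq_abs, sq_abs]
    ring
  have locally_le : ∀ f ∈ K, ∀ᶠ z : ℝ × V in 𝓝 (0, f),
      z.2 ∈ K → 0 < z.1 → ‖z.2 + z.1 • L z.2‖ ≤ 1 := by
    intro f hf
    rcases (hK1 f hf).lt_or_eq with hlt | heq
    · have hcont : Continuous fun z : ℝ × V ↦ ‖z.2 + z.1 • L z.2‖ := by fun_prop
      filter_upwards [hcont.continuousAt.eventually (gt_mem_nhds (by simpa using hlt))]
        with z hz _ _ using hz.le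
    · have hcont : Continuous fun z : ℝ × V ↦ 2 * ⟪z.2, L z.2⟫_ℝ + z.1 * ‖L z.2‖ ^ 2 := by
        fun_prop
      have hneg : 2 * ⟪f, L f⟫_ℝ + 0 * ‖L f‖ ^ 2 < 0 := by linarith [hL f hf heq]
      filter_upwards [hcont.continuousAt.eventually (gt_mem_nhds hneg)] with z hz hzK hz0
      rw [← sq_le_one_iff₀ (norm_nonneg _), expand]
      linarith [pow_le_one₀ (n := 2) (norm_nonneg _) (hK1 _ hzK),
        mul_nonpos_of_nonneg_of_nonpos hz0.le hz.le]
  have := hK.eventually_forall_of_forall_eventually (x₀ := (0 : ℝ))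
    (P := fun t f ↦ f ∈ K → 0 < t → ‖f + t • L f‖ ≤ 1) locally_le
  filter_upwards [this.filter_mono nhdsWithin_le_nhds, self_mem_nhdsWithin] with t ht ht0 f hf
  exact ht f hf hf ht0

lemma exists_forall_eq_trace_mul {K E : Type*} [Field K] [AddCommGroup E] [Module K E]
    [FiniteDimensional K E] (φ : Dual K (End K E)) :
    ∃ L : End K E, ∀ A, φ A = LinearMap.trace K E (L * A) := by
  let Φ : End K E →ₗ[K] Dual K (End K E) := (LinearMap.mul K (End K E)).compr₂ (.trace K E)
  have hΦ : Function.Injective Φ := by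
    refine (injective_iff_map_eq_zero Φ).2 fun L hL ↦ LinearMap.ext fun v ↦
      (forall_dual_apply_eq_zero_iff K (L v)).1 fun g ↦ ?_
    calc g (L v) = LinearMap.trace K E (L * g.smulRight v) := by
          rw [← LinearMap.trace_smulRight]
          congr 1
          ext w
          simp
      _ = 0 := LinearMap.congr_fun hL (g.smulRight v)
  obtain ⟨L, hL⟩ := (LinearMap.injective_iff_surjective_of_finrank_eq_finrank
    Subspace.dual_finrank_eq.symm).1 hΦ φ
  exact ⟨L, fun A ↦ (LinearMap.congr_fun hL A).symm⟩

lemma exists_inner_self_eq_rankOne_and_trace_eq {V : Type*} [NormedAddCommGroup V]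
    [InnerProductSpace ℝ V] [FiniteDimensional ℝ V] (φ : StrongDual ℝ (V →L[ℝ] V)) :
    ∃ L : V →L[ℝ] V, (∀ f, ⟪f, L f⟫_ℝ = φ (rankOne ℝ f f)) ∧
      LinearMap.trace ℝ V L = φ (.id ℝ V) := by
  obtain ⟨L, hL⟩ := exists_forall_eq_trace_mul
    (φ.toLinearMap ∘ₗ LinearMap.toContinuousLinearMap.toLinearMap)
  let L' : V →L[ℝ] V := LinearMap.toContinuousLinearMap L
  have hφ (A : V →L[ℝ] V) : φ A = LinearMap.trace ℝ V (L' ∘L A) := hL A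
  refine ⟨L', fun f ↦ ?_, by rw [hφ, ContinuousLinearMap.comp_id]⟩
  rw [hφ, comp_rankOne, trace_rankOne]

universe u

section John

variable {V X : Type*} [NormedAddCommGroup V] [InnerProductSpace ℝ V]
  [SeminormedAddCommGroup X] [NormedSpace ℝ X]

/-- The polar, with respect to the inner product of `V`, of the unit ball `{v | ‖S v‖ ≤ 1}` of the
seminorm that `S` pulls back from `X`. -/
def pullbackPolar (S : V →L[ℝ] X) : Set V :=
  {f | ∀ v, ⟪f, v⟫_ℝ ≤ ‖S v‖}

lemma norm_le_one_of_mem_pullbackPolar {S : V →L[ℝ] X} (hS : ‖S‖ ≤ 1) {f : V}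
    (hf : f ∈ pullbackPolar S) : ‖f‖ ≤ 1 := by
  have : ‖f‖ ^ 2 ≤ 1 * ‖f‖ :=
    real_inner_self_eq_norm_sq f ▸ (hf f).trans (S.le_of_opNorm_le hS f)
  by_contra! h
  nlinarith

lemma isClosed_pullbackPolar (S : V →L[ℝ] X) : IsClosed (pullbackPolar S) := by
  simp only [pullbackPolar, ofPred_forall]
  exact isClosed_iInter fun v ↦ isClosed_le (by fun_prop) continuous_const

variable [FiniteDimensional ℝ V]

lemma isCompact_pullbackPolar {S : V →L[ℝ] X} (hS : ‖S‖ ≤ 1) : IsCompact (pullbackPolar S) :=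
  (isCompact_closedBall 0 1).of_isClosed_subset (isClosed_pullbackPolar S) fun _ hf ↦
    mem_closedBall_zero_iff.2 (norm_le_one_of_mem_pullbackPolar hS hf)

lemma exists_mem_pullbackPolar_inner_eq_norm (S : V →L[ℝ] X) (v : V) :
    ∃ f ∈ pullbackPolar S, ⟪f, v⟫_ℝ = ‖S v‖ := by
  obtain ⟨g, hg, hgv⟩ := exists_dual_vector'' ℝ (S v)
  refine ⟨(toDual ℝ V).symm (g ∘L S), fun w ↦ ?_, by simpa using hgv⟩
  simpa using (le_abs_self _).trans (g.le_of_opNorm_le hg (S w))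

lemma norm_comp_le_one_of_norm_adjoint_le_one {S : V →L[ℝ] X} {T : V →L[ℝ] V}
    (hT : ∀ f ∈ pullbackPolar S, ‖T.adjoint f‖ ≤ 1) : ‖S ∘L T‖ ≤ 1 := by
  refine ContinuousLinearMap.opNorm_le_bound _ zero_le_one fun v ↦ ?_
  obtain ⟨f, hf, hfv⟩ := exists_mem_pullbackPolar_inner_eq_norm S (T v)
  calc ‖S (T v)‖ = ⟪T.adjoint f, v⟫_ℝ := by rw [← hfv, T.adjoint_inner_left]
    _ ≤ ‖T.adjoint f‖ * ‖v‖ := real_inner_le_norm _ _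
    _ ≤ 1 * ‖v‖ := by gcongr; exact hT f hf

lemma exists_norm_comp_le_one_and_one_lt_det {S : V →L[ℝ] X} (hS : ‖S‖ ≤ 1) {L : V →L[ℝ] V}
    (hL : ∀ f ∈ pullbackPolar S, ‖f‖ = 1 → ⟪f, L f⟫_ℝ < 0)
    (htr : 0 < LinearMap.trace ℝ V L) :
    ∃ T : V →L[ℝ] V, ‖S ∘L T‖ ≤ 1 ∧ 1 < T.det := by
  have hadj : ∀ f ∈ pullbackPolar S, ‖f‖ = 1 → ⟪f, L.adjoint f⟫_ℝ < 0 := fun f hf hf1 ↦ by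
    rw [L.adjoint_inner_right, real_inner_comm]
    exact hL f hf hf1
  obtain ⟨t, hnorm, hdet⟩ := ((eventually_norm_add_smul_le_one (isCompact_pullbackPolar hS)
    (fun _ ↦ norm_le_one_of_mem_pullbackPolar hS) _ hadj).and
    (eventually_one_lt_det_one_add_smul htr)).exists
  refine ⟨1 + t • L, norm_comp_le_one_of_norm_adjoint_le_one fun f hf ↦ ?_, hdet⟩
  simpa [ContinuousLinearMap.adjoint_one] using hnorm f hf

theorem inv_finrank_smul_id_mem_convexHull_rankOne [Nontrivial V] {S : V →L[ℝ] X}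
    (hS : ‖S‖ ≤ 1) (hmax : ∀ T : V →L[ℝ] V, ‖S ∘L T‖ ≤ 1 → T.det ≤ 1) :
    (finrank ℝ V : ℝ)⁻¹ • ContinuousLinearMap.id ℝ V ∈
      convexHull ℝ ((fun f ↦ rankOne ℝ f f) '' (pullbackPolar S ∩ sphere 0 1)) := by
  have hcompact : IsCompact ((fun f ↦ rankOne ℝ f f) '' (pullbackPolar S ∩ sphere 0 1)) :=
    ((isCompact_pullbackPolar hS).inter_right isClosed_sphere).image
      ((rankOne ℝ).continuous.clm_apply continuous_id)
  by_contra hnotMem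
  obtain ⟨φ, u, hφ, hu⟩ := geometric_hahn_banach_closed_point (convex_convexHull ℝ _)
    (isCompact_convexHull_of_isCompact hcompact).isClosed hnotMem
  obtain ⟨L, hL, htr⟩ := exists_inner_self_eq_rankOne_and_trace_eq φ
  have hneg : ∀ f ∈ pullbackPolar S, ‖f‖ = 1 → ⟪f, (L - u • .id ℝ V) f⟫_ℝ < 0 := by
    intro f hf hf1
    have := hφ _ (subset_convexHull ℝ _ ⟨f, ⟨hf, by simpa using hf1⟩, rfl⟩)
    simpa [inner_sub_right, inner_smul_right, hL, hf1] using this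
  have hpos : 0 < LinearMap.trace ℝ V (L - u • .id ℝ V : V →L[ℝ] V) := by
    have hn : (0 : ℝ) < finrank ℝ V := mod_cast finrank_pos
    rw [map_smul, smul_eq_mul, lt_inv_mul_iff₀ hn] at hu
    simpa [htr, mul_comm] using hu
  obtain ⟨T, hT, hdet⟩ := exists_norm_comp_le_one_and_one_lt_det hS hneg hpos
  exact (hmax T hT).not_gt hdet

theorem exists_john_decomposition {V : Type u} {X : Type*} [NormedAddCommGroup V]
    [InnerProductSpace ℝ V] [FiniteDimensional ℝ V] [SeminormedAddCommGroup X] [NormedSpace ℝ X]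
    {S : V →L[ℝ] X} (hS : ‖S‖ ≤ 1) (hmax : ∀ T : V →L[ℝ] V, ‖S ∘L T‖ ≤ 1 → T.det ≤ 1) :
    ∃ (ι : Type u) (_ : Fintype ι) (c : ι → ℝ) (f : ι → V), (∀ k, 0 ≤ c k) ∧
      ∑ k, c k = finrank ℝ V ∧ (∀ k, f k ∈ pullbackPolar S) ∧
      ∑ k, c k • rankOne ℝ (f k) (f k) = .id ℝ V := by
  rcases subsingleton_or_nontrivial V with _ | _
  · exact ⟨PEmpty, inferInstance, 0, 0, by simp, by simp [finrank_zero_of_subsingleton], by simp,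
      Subsingleton.elim _ _⟩
  have hmem := inv_finrank_smul_id_mem_convexHull_rankOne hS hmax
  obtain ⟨ι, _, z, w, hz, -, hw, hw1, hsum⟩ := eq_pos_convex_span_of_mem_convexHull hmem
  have hcontact (k : ι) : ∃ f ∈ pullbackPolar S, rankOne ℝ f f = z k := by
    obtain ⟨f, ⟨hf, -⟩, hfz⟩ := hz ⟨k, rfl⟩
    exact ⟨f, hf, hfz⟩
  choose f hf hfz using hcontact
  have hn : (finrank ℝ V : ℝ) ≠ 0 := mod_cast finrank_pos.ne'
  refine ⟨ι, inferInstance, fun k ↦ finrank ℝ V * w k, f, fun k ↦ ?_, ?_, hf, ?_⟩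
  · have := hw k
    positivity
  · rw [← Finset.mul_sum, hw1, mul_one]
  · simp_rw [hfz, mul_smul]
    rw [← Finset.smul_sum, hsum, smul_inv_smul₀ hn]

end John

section Projection

variable {ι V X Y : Type*} [Fintype ι] [NormedAddCommGroup V] [InnerProductSpace ℝ V]
  [NormedAddCommGroup X] [NormedSpace ℝ X] [NormedAddCommGroup Y] [NormedSpace ℝ Y]
  {c : ι → ℝ} {f : ι → V}

lemma norm_sq_sum_smul_le_sum_mul_sq (hc : ∀ k, 0 ≤ c k)
    (hid : ∑ k, c k • rankOne ℝ (f k) (f k) = .id ℝ V) (a : ι → ℝ) :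
    ‖∑ k, (c k * a k) • f k‖ ^ 2 ≤ ∑ k, c k * a k ^ 2 := by
  set b := ∑ k, (c k * a k) • f k
  have hcross : ∑ k, c k * (a k * ⟪f k, b⟫_ℝ) = ‖b‖ ^ 2 := by
    calc ∑ k, c k * (a k * ⟪f k, b⟫_ℝ) = ⟪∑ k, (c k * a k) • f k, b⟫_ℝ := by
          simp only [sum_inner, real_inner_smul_left, mul_assoc]
      _ = ‖b‖ ^ 2 := real_inner_self_eq_norm_sq b
  have hparseval : ∑ k, c k * ⟪f k, b⟫_ℝ ^ 2 = ‖b‖ ^ 2 := by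
    have := congr(⟪$hid b, b⟫_ℝ)
    simpa [sum_apply, sum_inner, real_inner_smul_left, ← sq,
      real_inner_self_eq_norm_sq] using this
  have hnonneg : 0 ≤ ∑ k, c k * (a k - ⟪f k, b⟫_ℝ) ^ 2 :=
    Finset.sum_nonneg fun k _ ↦ mul_nonneg (hc k) (sq_nonneg _)
  have hexpand : ∑ k, c k * (a k - ⟪f k, b⟫_ℝ) ^ 2 =
      ∑ k, c k * a k ^ 2 - 2 * ∑ k, c k * (a k * ⟪f k, b⟫_ℝ) + ∑ k, c k * ⟪f k, b⟫_ℝ ^ 2 := by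
    rw [Finset.mul_sum, ← Finset.sum_sub_distrib, ← Finset.sum_add_distrib]
    exact Finset.sum_congr rfl fun k _ ↦ by ring
  linarith

lemma norm_inner_symm_le_one_of_mem_pullbackPolar {S : V ≃L[ℝ] X} {g : V}
    (hg : g ∈ pullbackPolar (S : V →L[ℝ] X)) : ‖innerSL ℝ g ∘L (S.symm : X →L[ℝ] V)‖ ≤ 1 := by
  refine ContinuousLinearMap.opNorm_le_bound _ zero_le_one fun x ↦ abs_le'.2 ⟨?_, ?_⟩
  · simpa using hg (S.symm x)
  · simpa using hg (-S.symm x)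

lemma exists_extension_symm_norm_le_sqrt_sum (S : V ≃L[ℝ] X) (hc : ∀ k, 0 ≤ c k)
    (hf : ∀ k, f k ∈ pullbackPolar (S : V →L[ℝ] X))
    (hid : ∑ k, c k • rankOne ℝ (f k) (f k) = .id ℝ V) (i : X →ₗᵢ[ℝ] Y) :
    ∃ Q : Y →L[ℝ] V, (∀ x, Q (i x) = S.symm x) ∧ ‖Q‖ ≤ √(∑ k, c k) := by
  choose G hG hGnorm using fun k ↦
    exists_strongDual_extension_norm_eq i (innerSL ℝ (f k) ∘L (S.symm : X →L[ℝ] V))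
  have hQ (y : Y) : (∑ k, c k • (G k).smulRight (f k)) y = ∑ k, (c k * G k y) • f k := by
    simp [mul_smul]
  refine ⟨∑ k, c k • (G k).smulRight (f k), fun x ↦ ?_, ?_⟩
  · have := congr($hid (S.symm x))
    simpa [hQ, hG, sum_apply, mul_smul] using this
  · refine ContinuousLinearMap.opNorm_le_bound _ (by positivity) fun y ↦ ?_
    have hGy (k : ι) : G k y ^ 2 ≤ ‖y‖ ^ 2 := by
      refine sq_le_sq.2 (?_ : ‖G k y‖ ≤ |‖y‖|)
      simpa using (G k).le_of_opNorm_le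
        ((hGnorm k).trans_le (norm_inner_symm_le_one_of_mem_pullbackPolar (hf k))) y
    rw [hQ, ← Real.sqrt_sq (norm_nonneg y), ← Real.sqrt_mul (Finset.sum_nonneg fun k _ ↦ hc k)]
    refine Real.le_sqrt_of_sq_le ?_
    calc ‖∑ k, (c k * G k y) • f k‖ ^ 2 ≤ ∑ k, c k * G k y ^ 2 :=
          norm_sq_sum_smul_le_sum_mul_sq hc hid _
      _ ≤ ∑ k, c k * ‖y‖ ^ 2 := Finset.sum_le_sum fun k _ ↦ mul_le_mul_of_nonneg_left (hGy k) (hc k)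
      _ = (∑ k, c k) * ‖y‖ ^ 2 := (Finset.sum_mul ..).symm

theorem exists_projection_image_closedBall_subset (S : V ≃L[ℝ] X) (hc : ∀ k, 0 ≤ c k)
    (hf : ∀ k, f k ∈ pullbackPolar (S : V →L[ℝ] X))
    (hid : ∑ k, c k • rankOne ℝ (f k) (f k) = .id ℝ V) (i : X →ₗᵢ[ℝ] Y) :
    ∃ P : Y →L[ℝ] X, (∀ x, P (i x) = x) ∧
      P '' closedBall 0 1 ⊆ √(∑ k, c k) • (S '' closedBall 0 1) := by
  obtain ⟨Q, hQi, hQ⟩ := exists_extension_symm_norm_le_sqrt_sum S hc hf hid i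
  refine ⟨(S : V →L[ℝ] X) ∘L Q, fun x ↦ by simp [hQi], ?_⟩
  rw [← image_smul_set, smul_unitClosedBall_of_nonneg (Real.sqrt_nonneg _)]
  rintro _ ⟨y, hy, rfl⟩
  refine mem_image_of_mem S (mem_closedBall_zero_iff.2 ?_)
  exact (Q.unit_le_opNorm y (mem_closedBall_zero_iff.1 hy)).trans hQ

end Projection

lemma image_closedBall_subset_closedBall_iff_norm_le_one {E F : Type*} [SeminormedAddCommGroup E]
    [NormedSpace ℝ E] [SeminormedAddCommGroup F] [NormedSpace ℝ F] (T : E →L[ℝ] F) :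
    T '' closedBall 0 1 ⊆ closedBall 0 1 ↔ ‖T‖ ≤ 1 := by
  rw [image_subset_iff]
  refine ⟨fun h ↦ T.opNorm_le_of_unit_norm zero_le_one fun x hx ↦ ?_, fun h x hx ↦ ?_⟩
  · simpa using h (mem_closedBall_zero_iff.2 hx.le)
  · exact mem_closedBall_zero_iff.2 ((T.unit_le_opNorm x (mem_closedBall_zero_iff.1 hx)).trans h)

section Ellipsoid

variable {V X Y : Type*} [NormedAddCommGroup V] [InnerProductSpace ℝ V] [FiniteDimensional ℝ V]
  [MeasurableSpace V] [BorelSpace V] (μ : Measure V) [μ.IsAddHaarMeasure]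
  [NormedAddCommGroup X] [NormedSpace ℝ X] [NormedAddCommGroup Y] [NormedSpace ℝ Y]

lemma det_le_one_of_addHaar_ellipsoid_le (e : X ≃ₗ[ℝ] V) (S : V ≃L[ℝ] X)
    (hmax : ∀ R : V ≃ₗ[ℝ] X, R '' closedBall 0 1 ⊆ closedBall 0 1 →
      μ (e '' (R '' closedBall 0 1)) ≤ μ (e '' (S '' closedBall 0 1)))
    (T : V →L[ℝ] V) (hT : ‖(S : V →L[ℝ] X) ∘L T‖ ≤ 1) : T.det ≤ 1 := by
  rcases eq_or_ne T.det 0 with h0 | h0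
  · exact h0.trans_le zero_le_one
  let R : V ≃ₗ[ℝ] X := (LinearMap.equivOfDetNeZero T.toLinearMap h0).trans S.toLinearEquiv
  have hR : R '' closedBall 0 1 ⊆ closedBall 0 1 :=
    (image_closedBall_subset_closedBall_iff_norm_le_one ((S : V →L[ℝ] X) ∘L T)).2 hT
  refine (le_abs_self _).trans (abs_det_le_one_of_addHaar_image_comp_le (μ := μ)
    (S.toLinearEquiv.trans e) T.toLinearMap (measure_closedBall_pos μ 0 one_pos).ne'
    measure_closedBall_lt_top.ne ?_)
  have := hmax R hR
  rw [image_image, image_image] at this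
  exact this

theorem statement14_general (e : X ≃ₗ[ℝ] V) (S : V ≃ₗ[ℝ] X)
    (hS : S '' closedBall 0 1 ⊆ closedBall 0 1)
    (hmax : ∀ R : V ≃ₗ[ℝ] X, R '' closedBall 0 1 ⊆ closedBall 0 1 →
      μ (e '' (R '' closedBall 0 1)) ≤ μ (e '' (S '' closedBall 0 1)))
    (i : X →ₗᵢ[ℝ] Y) :
    ∃ P : Y →L[ℝ] X, (∀ x, P (i x) = x) ∧
      P '' closedBall 0 1 ⊆ √(finrank ℝ V) • (S '' closedBall 0 1) := by
  have : FiniteDimensional ℝ X := e.symm.finiteDimensional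
  let S' : V ≃L[ℝ] X := S.toContinuousLinearEquiv
  obtain ⟨ι, _, c, f, hc, hsum, hf, hid⟩ := exists_john_decomposition
    ((image_closedBall_subset_closedBall_iff_norm_le_one (S' : V →L[ℝ] X)).1 hS)
    (det_le_one_of_addHaar_ellipsoid_le μ e S' hmax)
  rw [← hsum]
  exact exists_projection_image_closedBall_subset S' hc hf hid i

end Ellipsoid

/-- Remark 1 (Kadets–Snobar): if `E` is an ellipsoid of maximal volume contained in
`B(X)`, then `√n • E` is a sufficient enlargement for `X`. (Volume is transported
to Lebesgue measure on `ℝⁿ` via the linear identification `e`.) -/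
theorem statement14 {n : ℕ} {X : Type} [NormedAddCommGroup X] [NormedSpace ℝ X]
    (e : X ≃ₗ[ℝ] EuclideanSpace ℝ (Fin n)) (E : Set X)
    (hE : ∃ S : EuclideanSpace ℝ (Fin n) ≃ₗ[ℝ] X,
      E = S '' closedBall (0 : EuclideanSpace ℝ (Fin n)) 1)
    (hEsub : E ⊆ closedBall (0 : X) 1)
    (hEmax : ∀ E' : Set X,
      (∃ S : EuclideanSpace ℝ (Fin n) ≃ₗ[ℝ] X,
        E' = S '' closedBall (0 : EuclideanSpace ℝ (Fin n)) 1) →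
      E' ⊆ closedBall (0 : X) 1 → volume (e '' E') ≤ volume (e '' E)) :
    IsSufficientEnlargement (Real.sqrt n • E) := by
  obtain ⟨S, rfl⟩ := hE
  intro Y _ _ _ i
  simpa using statement14_general volume e S hEsub (fun R ↦ hEmax _ ⟨R, rfl⟩) i
end
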